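/- Let D ⊆ ℂⁿ be a domain, let z ∈ D, and let (a_j)_{j=1}^∞ be a countable sequence of points of D. Then there exist a holomorphic map φ : 𝔻 → D and points λ_j ∈ 𝔻 such that φ(0) = z and φ(λ_j) = a_j for every j ≥ 1. In particular, the set of competitors in the definition of the Lempert function with countably many poles is always nonempty. -/

import Mathlib

open Metric Set Function


theorem chain_of_rtg {α : Type*} {R : α → α → Prop} {x y : α} (h : Relation.ReflTransGen R x y) :
    ∃ (q : ℕ → α) (N : ℕ), q 0 = x ∧ q N = y ∧ ∀ i, i < N → R (q i) (q (i+1)) := by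
  induction h with
  | refl => exact ⟨fun _ => x, 0, rfl, rfl, by simp⟩
  | @tail b c _ hbc ih =>
    obtain ⟨q, N, h0, hN, hR⟩ := ih
    refine ⟨fun i => if i ≤ N then q i else c, N + 1, by simp [h0], by simp, ?_⟩
    intro i hi
    rcases Nat.lt_succ_iff_lt_or_eq.mp hi with h | h
    · have h1 : i ≤ N := h.le
      have h2 : i + 1 ≤ N := h
      simp only [h1, h2, if_true]
      exact hR i h
    · subst h
      simp [hN, hbc]

theorem exists_long_chain {α : Type*} {R : α → α → Prop} (hrefl : ∀ x, R x x)
    (hR : ∀ x y, Relation.ReflTransGen R x y) (z : α) (a : ℕ → α) :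
    ∃ p : ℕ → α, p 0 = z ∧ (∀ k, R (p k) (p (k+1))) ∧ ∀ j, ∃ k, p k = a j := by
  let b : ℕ → α := fun j => Nat.casesOn j z a
  choose q N h0 hN hq using fun j => chain_of_rtg (hR (b j) (b (j+1)))
  let step : ℕ × ℕ → ℕ × ℕ := fun s => if s.2 < N s.1 then (s.1, s.2+1) else (s.1+1, 0)
  let st : ℕ → ℕ × ℕ := fun k => step^[k] (0,0)
  have hst : ∀ k, st (k+1) = step (st k) := fun k => Function.iterate_succ_apply' _ _ _
  have hle : ∀ k, (st k).2 ≤ N (st k).1 := by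
    intro k
    induction k with
    | zero => simp [st]
    | succ k ih =>
      rw [hst]
      simp only [step]
      split_ifs with h
      · exact h
      · simp
  have hwalk : ∀ k j, st k = (j, 0) → ∀ i, i ≤ N j → st (k+i) = (j, i) := by
    intro k j hk i
    induction i with
    | zero => intro _; simpa using hk
    | succ i ih =>
      intro hi
      rw [← add_assoc, hst, ih (by omega)]
      simp only [step]
      rw [if_pos (by simpa using hi)]
  have hvis : ∀ j, ∃ k, st k = (j, 0) := by
    intro j
    induction j with
    | zero => exact ⟨0, rfl⟩
    | succ j ih =>
      obtain ⟨k, hk⟩ := ih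
      refine ⟨k + N j + 1, ?_⟩
      rw [hst, hwalk k j hk (N j) le_rfl]
      simp [step]
  refine ⟨fun k => q (st k).1 (st k).2, ?_, ?_, ?_⟩
  · exact h0 0
  · intro k
    have := hle k
    simp only [hst, step]
    split_ifs with h
    · exact hq _ _ h
    · have e : (st k).2 = N (st k).1 := by omega
      simp only [e, hN, h0]
      exact hrefl _
  · intro j
    obtain ⟨k, hk⟩ := hvis (j+1)
    refine ⟨k, ?_⟩
    simp only [hk, h0]
    rfl

theorem exists_gauge {E : Type*} [NormedAddCommGroup E] {D : Set E} (hD : IsOpen D) :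
    ∃ δ : E → ℝ, (∀ x y, δ y ≤ δ x + ‖y - x‖) ∧ (∀ x ∈ D, 0 < δ x) ∧
      ∀ x ∈ D, ∀ y, ‖y - x‖ < δ x → y ∈ D := by
  by_cases h : (Dᶜ).Nonempty
  · refine ⟨fun x => infDist x Dᶜ, ?_, ?_, ?_⟩
    · intro x y
      rw [← dist_eq_norm]
      exact infDist_le_infDist_add_dist
    · intro x hx
      exact (hD.isClosed_compl.notMem_iff_infDist_pos h).1 (by simpa using hx)
    · intro x hx y hy
      by_contra hyD
      have := infDist_le_dist_of_mem (x := x) (s := Dᶜ) hyD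
      rw [dist_comm, dist_eq_norm] at this
      linarith
  · rw [not_nonempty_iff_eq_empty, compl_empty_iff] at h
    subst h
    exact ⟨fun _ => 1, by intros; simp, by simp, by simp⟩

/-- Closeness relation. -/
def Near {E : Type*} [NormedAddCommGroup E] (δ : E → ℝ) (η : ℝ) (x y : E) : Prop :=
  ‖y - x‖ ≤ η * δ x ∧ ‖y - x‖ ≤ η * δ y

theorem near_rtg {E : Type*} [NormedAddCommGroup E] {D : Set E} (hD : IsOpen D)
    (hc : IsConnected D) {δ : E → ℝ} (h1 : ∀ x y, δ y ≤ δ x + ‖y - x‖) (h2 : ∀ x ∈ D, 0 < δ x)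
    {η : ℝ} (hη : 0 < η) (x y : D) :
    Relation.ReflTransGen (fun x y : D => Near δ η (x : E) y) x y := by
  set R := fun x y : D => Near δ η (x : E) y with hR
  have hsymm : ∀ u v : D, R u v → R v u := by
    rintro u v ⟨a, b⟩
    exact ⟨by rw [norm_sub_rev]; exact b, by rw [norm_sub_rev]; exact a⟩
  have hδ : Continuous δ := by
    refine (LipschitzWith.of_le_add fun x y => ?_ : LipschitzWith 1 δ).continuous
    rw [dist_eq_norm]; exact h1 y x
  have hloc : ∀ u : D, ∀ᶠ v in nhds u, R u v := by
    intro u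
    have hu := h2 u u.2
    have c1 : ContinuousAt (fun v : D => ‖(v : E) - u‖) u := by fun_prop
    have c2 : ContinuousAt (fun v : D => η * δ v) u := by fun_prop
    have e1 : ∀ᶠ v : D in nhds u, ‖(v : E) - u‖ < η * δ u :=
      c1.eventually_lt continuousAt_const (by simpa using mul_pos hη hu)
    have e2 : ∀ᶠ v : D in nhds u, ‖(v : E) - u‖ < η * δ v :=
      c1.eventually_lt c2 (by simpa using mul_pos hη hu)
    filter_upwards [e1, e2] with v a b using ⟨a.le, b.le⟩
  have : PreconnectedSpace D := isPreconnected_iff_preconnectedSpace.1 hc.isPreconnected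
  have hclopen : IsClopen {v : D | Relation.ReflTransGen R x v} := by
    refine ⟨⟨?_⟩, ?_⟩
    · rw [isOpen_iff_mem_nhds]
      intro u hu
      filter_upwards [hloc u] with v hv hv'
      exact hu (Relation.ReflTransGen.tail hv' (hsymm _ _ hv))
    · rw [isOpen_iff_mem_nhds]
      intro u hu
      filter_upwards [hloc u] with v hv
      exact Relation.ReflTransGen.tail hu hv
  have := hclopen.eq_univ ⟨x, Relation.ReflTransGen.refl⟩
  exact (this ▸ mem_univ y : y ∈ {v : D | Relation.ReflTransGen R x v})

theorem near_growth_nat {E : Type*} [NormedAddCommGroup E] {δ : E → ℝ}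
    (h1 : ∀ x y, δ y ≤ δ x + ‖y - x‖) {η : ℝ} (hη : 0 ≤ η) (hη1 : η ≤ 1)
    (p : ℕ → E) (h : ∀ k, Near δ η (p k) (p (k+1))) (j : ℕ) :
    ‖p j - p 0‖ ≤ η * (2 ^ j - 1) * δ (p 0) := by
  induction j with
  | zero => simp
  | succ j ih =>
    have a := (h j).1
    have b := h1 (p 0) (p j)
    have t : ‖p (j+1) - p 0‖ ≤ ‖p (j+1) - p j‖ + ‖p j - p 0‖ := norm_sub_le_norm_sub_add_norm_sub _ _ _
    have q : (1:ℝ) ≤ 2 ^ j := one_le_pow₀ (by norm_num)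
    have n0 := norm_nonneg (p j - p 0)
    have u : η * δ (p j) ≤ η * δ (p 0) + η * ‖p j - p 0‖ := by
      rw [← mul_add]; gcongr
    have v : η * ‖p j - p 0‖ ≤ 1 * ‖p j - p 0‖ := by gcongr
    rw [pow_succ]
    linarith

theorem near_growth {E : Type*} [NormedAddCommGroup E] {δ : E → ℝ}
    (h1 : ∀ x y, δ y ≤ δ x + ‖y - x‖) {η : ℝ} (hη : 0 ≤ η) (hη1 : η ≤ 1)
    (p : ℤ → E) (h : ∀ k, Near δ η (p k) (p (k+1))) (h0 : ∀ k, 0 ≤ δ (p k)) (k m : ℤ) :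
    ‖p k - p m‖ ≤ η * 2 ^ (k - m).natAbs * δ (p m) := by
  have key : ‖p k - p m‖ ≤ η * (2 ^ (k - m).natAbs - 1) * δ (p m) := by
    rcases le_total m k with hk | hk
    · have := near_growth_nat h1 hη hη1 (fun i : ℕ => p (m + i))
        (fun i => by simpa [add_assoc] using h (m + i)) (k - m).natAbs
      have e : m + ((k - m).natAbs : ℤ) = k := by omega
      simp only [e, Nat.cast_zero, add_zero, sub_zero] at this
      exact this
    · have := near_growth_nat h1 hη hη1 (fun i : ℕ => p (m - i))
        (fun i => by
          have := h (m - (i+1 : ℕ))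
          have e : m - ((i + 1 : ℕ) : ℤ) + 1 = m - i := by push_cast; ring
          rw [e] at this
          exact ⟨by rw [norm_sub_rev]; exact this.2, by rw [norm_sub_rev]; exact this.1⟩)
        (k - m).natAbs
      have e : m - ((k - m).natAbs : ℤ) = k := by omega
      simp only [e, Nat.cast_zero, add_zero, sub_zero] at this
      exact this
  refine key.trans ?_
  have := h0 m
  gcongr
  linarith

theorem summable_half : Summable fun j : ℤ => (1/2 : ℝ) ^ j.natAbs := by
  apply Summable.of_nat_of_neg <;> simpa using summable_geometric_two

/-- The entire function `sin (π z) / (π z)`. -/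
noncomputable def csinc : ℂ → ℂ := dslope (fun z => Complex.sin (Real.pi * z) / Real.pi) 0

theorem csinc_diff : Differentiable ℂ csinc := by
  rw [← differentiableOn_univ]
  refine (Complex.differentiableOn_dslope Filter.univ_mem).2 ?_
  fun_prop

theorem csinc_zero : csinc 0 = 1 := by
  rw [csinc, dslope_same]
  have : HasDerivAt (fun z : ℂ => Complex.sin (Real.pi * z) / Real.pi)
      (Complex.cos (Real.pi * 0) * (Real.pi * 1) / Real.pi) 0 :=
    (((hasDerivAt_id (0:ℂ)).const_mul (Real.pi : ℂ)).csin).div_const _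
  rw [this.deriv]
  have : (Real.pi : ℂ) ≠ 0 := by exact_mod_cast Real.pi_ne_zero
  simp [this]

theorem csinc_ne {z : ℂ} (hz : z ≠ 0) : csinc z = z⁻¹ * (Complex.sin (Real.pi * z) / Real.pi) := by
  rw [csinc, dslope_of_ne _ hz, slope_def_module]
  simp

theorem csinc_int {j : ℤ} (hj : j ≠ 0) : csinc j = 0 := by
  rw [csinc_ne (by exact_mod_cast hj), mul_comm (Real.pi : ℂ), Complex.sin_int_mul_pi]
  simp

theorem norm_csin_le (z : ℂ) : ‖Complex.sin z‖ ≤ Real.exp |z.im| := by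
  rw [Complex.sin, norm_div, norm_mul, Complex.norm_I, mul_one]
  have h1 : ‖Complex.exp (-z * Complex.I)‖ ≤ Real.exp |z.im| := by
    rw [Complex.norm_exp]; gcongr; simpa using le_abs_self z.im
  have h2 : ‖Complex.exp (z * Complex.I)‖ ≤ Real.exp |z.im| := by
    rw [Complex.norm_exp]; gcongr; simpa using neg_le_abs z.im
  have := norm_sub_le (Complex.exp (-z * Complex.I)) (Complex.exp (z * Complex.I))
  simp only [Complex.norm_ofNat]
  linarith

theorem csinc_bdd : ∃ M : ℝ, 0 < M ∧ ∀ z : ℂ, |z.im| ≤ 1 → ‖csinc z‖ ≤ M := by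
  obtain ⟨M, hM⟩ := (isCompact_closedBall (0:ℂ) 1).exists_bound_of_continuousOn
    csinc_diff.continuous.continuousOn
  refine ⟨max M (Real.exp Real.pi), lt_max_of_lt_right (Real.exp_pos _), ?_⟩
  intro z hz
  rcases le_or_gt ‖z‖ 1 with h | h
  · exact (hM z (by simpa using h)).trans (le_max_left _ _)
  · refine le_trans ?_ (le_max_right _ _)
    have hz0 : z ≠ 0 := by rintro rfl; simp at h; linarith
    rw [csinc_ne hz0, norm_mul, norm_inv, norm_div]
    have h1 : ‖Complex.sin (Real.pi * z)‖ ≤ Real.exp Real.pi := by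
      refine (norm_csin_le _).trans ?_
      gcongr
      simp only [Complex.mul_im, Complex.ofReal_re, Complex.ofReal_im, zero_mul, add_zero, abs_mul,
        abs_of_pos Real.pi_pos]
      nlinarith [Real.pi_pos]
    have h2 : ‖(Real.pi : ℂ)‖ = Real.pi := by simp [abs_of_pos Real.pi_pos]
    rw [h2]
    have h3 : ‖z‖⁻¹ ≤ 1 := inv_le_one_of_one_le₀ h.le
    have h4 : ‖Complex.sin (Real.pi * z)‖ / Real.pi ≤ Real.exp Real.pi :=
      (div_le_self (norm_nonneg _) (by linarith [Real.pi_gt_three])).trans h1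
    calc _ ≤ 1 * Real.exp Real.pi := by gcongr
      _ = _ := one_mul _

/-- The interpolation kernel. -/
noncomputable def ker (z : ℂ) : ℂ := Complex.exp (-z ^ 2) * csinc z ^ 2

theorem ker_diff : Differentiable ℂ ker := by
  have := csinc_diff
  unfold ker
  fun_prop

theorem ker_zero : ker 0 = 1 := by simp [ker, csinc_zero]

theorem ker_int {j : ℤ} (hj : j ≠ 0) : ker j = 0 := by simp [ker, csinc_int hj]

theorem ker_bound : ∃ C : ℝ, 0 < C ∧ ∀ (z : ℂ) (m k : ℤ), |z.im| ≤ 1 → |z.re - m| ≤ 1 →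
    ‖ker (z - k)‖ ≤ C * (1/4) ^ (k - m).natAbs := by
  obtain ⟨M, hM, hb⟩ := csinc_bdd
  refine ⟨Real.exp 4 * M ^ 2, by positivity, ?_⟩
  intro z m k hi hr
  have h1 : ‖csinc (z - k)‖ ≤ M := hb _ (by simpa using hi)
  have h2 : ‖Complex.exp (-(z - k) ^ 2)‖ ≤ Real.exp 4 * (1/4) ^ (k - m).natAbs := by
    have e1 : (1/4 : ℝ) = Real.exp (-Real.log 4) := by
      rw [Real.exp_neg, Real.exp_log (by norm_num)]; norm_num
    rw [Complex.norm_exp, e1, ← Real.exp_nat_mul, ← Real.exp_add]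
    gcongr
    have e2 : ((-(z - k) ^ 2).re : ℝ) = -(z.re - k) ^ 2 + z.im ^ 2 := by
      simp [sq]; ring
    rw [e2]
    have e3 : (((k - m).natAbs : ℕ) : ℝ) = |(k : ℝ) - m| := by
      rw [Nat.cast_natAbs]; push_cast; rfl
    rw [e3]
    have e4 : Real.log 4 ≤ 2 := by
      have : Real.log 4 = 2 * Real.log 2 := by
        rw [← Real.log_rpow (by norm_num)]; norm_num
      linarith [Real.log_two_lt_d9]
    have e5 : |(k : ℝ) - m| ≤ |z.re - k| + 1 := by
      have := abs_sub_le (k:ℝ) z.re m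
      rw [abs_sub_comm (k:ℝ) z.re] at this
      linarith
    have e6 : z.im ^ 2 ≤ 1 := by
      rw [← sq_abs]; nlinarith [abs_nonneg z.im]
    have e7 : (z.re - k) ^ 2 = |z.re - k| ^ 2 := (sq_abs _).symm
    have e8 : |(k : ℝ) - m| * Real.log 4 ≤ |(k : ℝ) - m| * 2 := by gcongr
    nlinarith [sq_nonneg (|z.re - k| - 1)]
  rw [ker, norm_mul, norm_pow]
  calc _ ≤ (Real.exp 4 * (1/4) ^ (k - m).natAbs) * M ^ 2 := by gcongr
    _ = _ := by ring

theorem csinc_real (x : ℝ) : (csinc x).im = 0 := by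
  by_cases h : x = 0
  · simp [h, csinc_zero]
  · rw [csinc_ne (by exact_mod_cast h)]
    have : (x : ℂ)⁻¹ * (Complex.sin (Real.pi * x) / Real.pi) =
      ((x⁻¹ * (Real.sin (Real.pi * x) / Real.pi) : ℝ) : ℂ) := by push_cast; rfl
    rw [this, Complex.ofReal_im]

theorem csinc_real_ne {x : ℝ} (hx : |x| ≤ 1/2) : csinc x ≠ 0 := by
  by_cases h : x = 0
  · simp [h, csinc_zero]
  · have hx0 : (x : ℂ) ≠ 0 := by exact_mod_cast h
    rw [csinc_ne hx0]
    have hp : (Real.pi : ℂ) ≠ 0 := by exact_mod_cast Real.pi_ne_zero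
    refine mul_ne_zero (inv_ne_zero hx0) (div_ne_zero ?_ hp)
    have : Real.sin (Real.pi * x) ≠ 0 := by
      intro h0
      obtain ⟨n, hn⟩ := Real.sin_eq_zero_iff.1 h0
      have : (n : ℝ) = x := by
        have := Real.pi_ne_zero
        rw [mul_comm] at hn
        exact mul_left_cancel₀ this hn
      rw [← this] at hx
      have h5 : |n| < 1 := by
        have : |(n:ℝ)| < 1 := by linarith
        exact_mod_cast this
      rw [Int.abs_lt_one_iff] at h5
      subst h5
      exact h (by simpa using this.symm)
    exact_mod_cast this

theorem ker_real (x : ℝ) : (ker x).re = Real.exp (-x ^ 2) * (csinc x).re ^ 2 := by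
  have h : csinc x = ((csinc x).re : ℂ) := by
    apply Complex.ext <;> simp [csinc_real]
  have : ker x = ((Real.exp (-x ^ 2) * (csinc x).re ^ 2 : ℝ) : ℂ) := by
    rw [ker, h]; push_cast; simp
  rw [this, Complex.ofReal_re]

theorem summable_quarter (m : ℤ) : Summable fun k : ℤ => (1/4 : ℝ) ^ (k - m).natAbs := by
  have : Summable fun k : ℤ => (1/4 : ℝ) ^ k.natAbs := by
    apply Summable.of_nat_of_neg <;>
      simpa using summable_geometric_of_lt_one (r := (4⁻¹ : ℝ)) (by norm_num) (by norm_num)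
  exact ((Equiv.subRight m).summable_iff (f := fun k : ℤ => (1/4 : ℝ) ^ k.natAbs)).2 this

theorem isOpen_patch (m : ℤ) : IsOpen {z : ℂ | |z.im| < 1 ∧ |z.re - m| < 1} := by
  exact (isOpen_lt (f := fun z : ℂ => |z.im|) (g := fun _ => (1:ℝ)) (by fun_prop) (by fun_prop)).inter
    (isOpen_lt (f := fun z : ℂ => |z.re - m|) (g := fun _ => (1:ℝ)) (by fun_prop) (by fun_prop))

theorem abs_floor_lt (x : ℝ) : |x - ⌊x⌋| < 1 := by
  rw [abs_lt]; constructor <;> linarith [Int.floor_le x, Int.lt_floor_add_one x]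

/-- The normalising sum. -/
noncomputable def kerSum (z : ℂ) : ℂ := ∑' k : ℤ, ker (z - k)

theorem ker_summable {z : ℂ} (hz : |z.im| < 1) : Summable fun k : ℤ => ker (z - k) := by
  obtain ⟨C, hC, hb⟩ := ker_bound
  exact Summable.of_norm_bounded ((summable_quarter ⌊z.re⌋).mul_left C)
    fun k => hb z _ k hz.le (abs_floor_lt _).le

theorem kerSum_diff {z : ℂ} (hz : |z.im| < 1) : DifferentiableAt ℂ kerSum z := by
  obtain ⟨C, hC, hb⟩ := ker_bound
  have := Complex.differentiableOn_tsum_of_summable_norm (F := fun (k : ℤ) z => ker (z - k))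
    ((summable_quarter ⌊z.re⌋).mul_left C)
    (fun k => (ker_diff.comp (differentiable_id.sub_const (k:ℂ))).differentiableOn)
    (isOpen_patch ⌊z.re⌋) (fun k w hw => hb w _ k hw.1.le hw.2.le)
  exact this.differentiableAt ((isOpen_patch ⌊z.re⌋).mem_nhds ⟨hz, abs_floor_lt _⟩)

theorem kerSum_periodic (z : ℂ) (n : ℤ) : kerSum (z - n) = kerSum z := by
  unfold kerSum
  rw [← (Equiv.addLeft n).tsum_eq (fun k : ℤ => ker (z - k))]
  congr 1
  ext k
  simp [sub_sub]

theorem kerSum_real_ne (x : ℝ) : kerSum x ≠ 0 := by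
  have hs := ker_summable (z := (x:ℂ)) (by simp)
  have hpos : 0 < (kerSum x).re := by
    rw [kerSum, Complex.re_tsum hs]
    have hr : ∀ k : ℤ, (ker ((x:ℂ) - k)).re = Real.exp (-(x-k) ^ 2) * (csinc ((x-k : ℝ) : ℂ)).re ^ 2 := by
      intro k
      rw [← ker_real]; push_cast; rfl
    refine Summable.tsum_pos (Complex.hasSum_re hs.hasSum).summable ?_ (round x) ?_
    · intro k; rw [hr]; positivity
    · rw [hr]
      have h1 := csinc_real_ne (abs_sub_round x)
      have h2 : (csinc ((x - round x : ℝ) : ℂ)).re ≠ 0 := by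
        intro h
        exact h1 (Complex.ext h (csinc_real _))
      positivity
  intro h
  simp [h] at hpos

theorem kerSum_lower : ∃ τ c : ℝ, 0 < τ ∧ τ ≤ 1 ∧ 0 < c ∧ ∀ z : ℂ, |z.im| < τ → c ≤ ‖kerSum z‖ := by
  let K : Set ℂ := Complex.ofReal '' Icc 0 1
  have hK : IsCompact K := isCompact_Icc.image Complex.continuous_ofReal
  let U : Set ℂ := {z | |z.im| < 1}
  have hU : IsOpen U := isOpen_lt (by fun_prop) (by fun_prop)
  have hcont : ContinuousOn (fun z => ‖kerSum z‖) U := fun z hz =>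
    (kerSum_diff hz).continuousAt.norm.continuousWithinAt
  have hKU : K ⊆ U := by
    rintro _ ⟨x, _, rfl⟩
    simp [U]
  obtain ⟨w, hw, hmin⟩ := hK.exists_isMinOn ⟨_, mem_image_of_mem _ (left_mem_Icc.2 zero_le_one)⟩
    (hcont.mono hKU)
  have hwpos : 0 < ‖kerSum w‖ := by
    obtain ⟨x, _, rfl⟩ := hw
    exact norm_pos_iff.2 (kerSum_real_ne x)
  have hV := hcont.isOpen_inter_preimage hU (isOpen_Ioi (a := ‖kerSum w‖ / 2))
  obtain ⟨δ, hδ, hsub⟩ := hK.exists_thickening_subset_open hV (by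
    intro z hz
    refine ⟨hKU hz, ?_⟩
    have : ‖kerSum w‖ ≤ ‖kerSum z‖ := hmin hz
    simp only [mem_preimage, mem_Ioi]; linarith)
  refine ⟨min δ 1, ‖kerSum w‖ / 2, by positivity, min_le_right _ _, by positivity, ?_⟩
  intro z hz
  rw [← kerSum_periodic z ⌊z.re⌋]
  have : z - ⌊z.re⌋ ∈ thickening δ K := by
    rw [mem_thickening_iff]
    refine ⟨_, mem_image_of_mem _ ⟨Int.fract_nonneg z.re, (Int.fract_lt_one z.re).le⟩, ?_⟩
    rw [dist_eq_norm]
    have : z - ⌊z.re⌋ - (Int.fract z.re : ℝ) = (z.im : ℂ) * Complex.I := by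
      apply Complex.ext <;> simp
    rw [this]
    simpa using hz.trans_le (min_le_left _ _)
  exact (hsub this).2.le

theorem summable_half' (m : ℤ) : Summable fun k : ℤ => (1/2 : ℝ) ^ (k - m).natAbs :=
  ((Equiv.subRight m).summable_iff (f := fun k : ℤ => (1/2 : ℝ) ^ k.natAbs)).2 summable_half

theorem tsum_half (m : ℤ) :
    ∑' k : ℤ, (1/2 : ℝ) ^ (k - m).natAbs = ∑' k : ℤ, (1/2 : ℝ) ^ k.natAbs :=
  (Equiv.subRight m).tsum_eq (fun k : ℤ => (1/2 : ℝ) ^ k.natAbs)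

theorem quarter_two (j : ℕ) : (1/4 : ℝ) ^ j * 2 ^ j = (1/2) ^ j := by
  rw [← mul_pow]; norm_num

theorem strip_map {E : Type*} [NormedAddCommGroup E] [NormedSpace ℂ E] [CompleteSpace E]
    {D : Set E} (hD : IsOpen D) (hc : IsConnected D) (z : E) (hz : z ∈ D)
    (a : ℕ → E) (ha : ∀ j, a j ∈ D) :
    ∃ (τ : ℝ) (f : ℂ → E), 0 < τ ∧ (∀ w : ℂ, |w.im| < τ → DifferentiableAt ℂ f w ∧ f w ∈ D) ∧
      f 0 = z ∧ ∀ j, ∃ k : ℤ, f k = a j := by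
  obtain ⟨τ, c, hτ, hτ1, hc0, hlow⟩ := kerSum_lower
  obtain ⟨C, hC, hb⟩ := ker_bound
  obtain ⟨δ, hδ1, hδ2, hδ3⟩ := exists_gauge hD
  set S : ℝ := ∑' k : ℤ, (1/2 : ℝ) ^ k.natAbs with hS
  have hS0 : 0 ≤ S := tsum_nonneg fun k => by positivity
  obtain ⟨η, hη, hη1, hηS⟩ : ∃ η : ℝ, 0 < η ∧ η ≤ 1 ∧ c⁻¹ * (C * η * S) < 1 := by
    refine ⟨min 1 (c / (C * (S + 1))), by positivity, min_le_left _ _, ?_⟩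
    have h1 : min 1 (c / (C * (S + 1))) ≤ c / (C * (S + 1)) := min_le_right _ _
    calc _ ≤ c⁻¹ * (C * (c / (C * (S + 1))) * S) := by gcongr
      _ = S / (S + 1) := by field_simp
      _ < 1 := by rw [div_lt_one (by positivity)]; linarith
  have hrefl : ∀ x : D, Near δ η (x : E) x := fun x => by
    have := hδ2 x x.2
    constructor <;> simp <;> positivity
  obtain ⟨p, hp0, hpR, hpa⟩ := exists_long_chain (R := fun x y : D => Near δ η (x : E) y) hrefl
    (fun x y => near_rtg hD hc hδ1 hδ2 hη x y) ⟨z, hz⟩ (fun j => ⟨a j, ha j⟩)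
  let P : ℤ → E := fun k => (p k.toNat : E)
  have hPD : ∀ k, P k ∈ D := fun k => (p k.toNat).2
  have hPR : ∀ k, Near δ η (P k) (P (k+1)) := by
    intro k
    rcases lt_or_ge k 0 with h | h
    · have e1 : k.toNat = 0 := by omega
      have e2 : (k+1).toNat = 0 := by omega
      simp only [P, e1, e2]
      exact hrefl _
    · have e2 : (k+1).toNat = k.toNat + 1 := by omega
      simp only [P, e2]
      exact hpR _
  have hgrow := near_growth hδ1 hη.le hη1 P hPR (fun k => (hδ2 _ (hPD k)).le)
  have hbound : ∀ (w : ℂ) (m k : ℤ), |w.im| ≤ 1 → |w.re - m| ≤ 1 →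
      ‖ker (w - k) • P k‖ ≤ (C * (‖P m‖ + δ (P m))) * (1/2) ^ (k - m).natAbs := by
    intro w m k h1 h2
    have hδm := hδ2 _ (hPD m)
    have g1 : ‖P k‖ ≤ 2 ^ (k - m).natAbs * (‖P m‖ + δ (P m)) := by
      have t1 := norm_sub_norm_le (P k) (P m)
      have t2 := hgrow k m
      have q : (1:ℝ) ≤ 2 ^ (k - m).natAbs := one_le_pow₀ (by norm_num)
      have t3 : η * 2 ^ (k - m).natAbs * δ (P m) ≤ 1 * 2 ^ (k - m).natAbs * δ (P m) := by gcongr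
      nlinarith [norm_nonneg (P m)]
    rw [norm_smul]
    calc _ ≤ (C * (1/4) ^ (k - m).natAbs) * (2 ^ (k - m).natAbs * (‖P m‖ + δ (P m))) := by
          gcongr
          exact hb w m k h1 h2
      _ = (C * (‖P m‖ + δ (P m))) * ((1/4) ^ (k - m).natAbs * 2 ^ (k - m).natAbs) := by ring
      _ = _ := by rw [quarter_two]
  let N : ℂ → E := fun w => ∑' k : ℤ, ker (w - k) • P k
  have hval : ∀ j : ℤ, (kerSum j)⁻¹ • N j = P j := by
    intro j
    have h1 : ∀ k : ℤ, k ≠ j → ker ((j:ℂ) - k) = 0 := fun k hk => by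
      rw [← Int.cast_sub]; exact ker_int (by omega)
    have e1 : kerSum j = 1 := by
      rw [kerSum, tsum_eq_single j h1]; simp [ker_zero]
    have e2 : N j = P j := by
      simp only [N]
      rw [tsum_eq_single j (fun k hk => by rw [h1 k hk, zero_smul])]; simp [ker_zero]
    rw [e1, e2]; simp
  refine ⟨τ, fun w => (kerSum w)⁻¹ • N w, hτ, ?_, ?_, ?_⟩
  · intro w hw
    have hw1 : |w.im| < 1 := hw.trans_le hτ1
    have hne : kerSum w ≠ 0 := norm_pos_iff.1 (hc0.trans_le (hlow w hw))
    set m := ⌊w.re⌋ with hm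
    have hwm : |w.re - m| < 1 := abs_floor_lt _
    constructor
    · have := Complex.differentiableOn_tsum_of_summable_norm
        (F := fun (k : ℤ) w => ker (w - k) • P k)
        ((summable_half' m).mul_left (C * (‖P m‖ + δ (P m))))
        (fun k => ((ker_diff.comp (differentiable_id.sub_const (k:ℂ))).smul_const _).differentiableOn)
        (isOpen_patch m) (fun k w hw => hbound w _ k hw.1.le hw.2.le)
      have hN : DifferentiableAt ℂ N w :=
        this.differentiableAt ((isOpen_patch m).mem_nhds ⟨hw1, hwm⟩)
      exact ((kerSum_diff hw1).inv hne).smul hN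
    · apply hδ3 (P m) (hPD m)
      have hδm := hδ2 _ (hPD m)
      have s1 : Summable fun k : ℤ => ker (w - k) • P k :=
        Summable.of_norm_bounded ((summable_half' m).mul_left (C * (‖P m‖ + δ (P m))))
          fun k => hbound w m k hw1.le hwm.le
      have s2 : Summable fun k : ℤ => ker (w - k) • P m := (ker_summable hw1).smul_const _
      have e : (kerSum w)⁻¹ • N w - P m = (kerSum w)⁻¹ • ∑' k : ℤ, ker (w - k) • (P k - P m) := by
        simp only [smul_sub]
        rw [s1.tsum_sub s2, (ker_summable hw1).tsum_smul_const, smul_sub]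
        congr 1
        change P m = (kerSum w)⁻¹ • kerSum w • P m
        rw [inv_smul_smul₀ hne]
      have hs : ‖∑' k : ℤ, ker (w - k) • (P k - P m)‖ ≤ (C * η * δ (P m)) * S := by
        rw [hS, ← tsum_half m, ← tsum_mul_left]
        refine tsum_of_norm_bounded ((summable_half' m).mul_left _).hasSum fun k => ?_
        rw [norm_smul]
        calc _ ≤ (C * (1/4) ^ (k - m).natAbs) * (η * 2 ^ (k - m).natAbs * δ (P m)) := by
              gcongr
              · exact hb w m k hw1.le hwm.le
              · exact hgrow k m
          _ = (C * η * δ (P m)) * ((1/4) ^ (k - m).natAbs * 2 ^ (k - m).natAbs) := by ring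
          _ = _ := by rw [quarter_two]
      rw [e, norm_smul, norm_inv]
      calc _ ≤ c⁻¹ * ((C * η * δ (P m)) * S) := by
            gcongr
            exact hlow w hw
        _ = (c⁻¹ * (C * η * S)) * δ (P m) := by ring
        _ < 1 * δ (P m) := by gcongr
        _ = _ := one_mul _
  · have := hval 0
    simp only [Int.cast_zero] at this
    simp only [this, P, Int.toNat_zero, hp0]
  · intro j
    obtain ⟨k, hk⟩ := hpa j
    refine ⟨k, ?_⟩
    simp only [hval, P, Int.toNat_natCast, hk]

theorem disc_to_strip {τ : ℝ} (hτ : 0 < τ) :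
    ∃ h : ℂ → ℂ, DifferentiableOn ℂ h (ball 0 1) ∧ (∀ w ∈ ball (0:ℂ) 1, |(h w).im| < τ) ∧
      h 0 = 0 ∧ ∀ x : ℝ, ∃ w ∈ ball (0:ℂ) 1, h w = x := by
  set b : ℝ := τ / Real.pi with hb
  have hb0 : 0 < b := div_pos hτ Real.pi_pos
  have hre : ∀ w ∈ ball (0:ℂ) 1, 1 - w ≠ 0 ∧ 0 < ((1 + w) / (1 - w)).re := by
    intro w hw
    have hw' : ‖w‖ < 1 := by simpa using hw
    have hne : 1 - w ≠ 0 := by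
      intro h
      have : w = 1 := (sub_eq_zero.1 h).symm
      simp [this] at hw'
    refine ⟨hne, ?_⟩
    have hn := Complex.normSq_pos.2 hne
    rw [Complex.div_re, ← add_div]
    apply div_pos _ hn
    have h2 : w.re ^ 2 + w.im ^ 2 < 1 := by
      have : Complex.normSq w < 1 := by
        rw [Complex.normSq_eq_norm_sq]; nlinarith [norm_nonneg w]
      rw [Complex.normSq_apply] at this
      nlinarith
    simp
    nlinarith
  refine ⟨fun w => b * Complex.log ((1 + w) / (1 - w)), ?_, ?_, by simp, ?_⟩
  · intro w hw
    obtain ⟨h1, h2⟩ := hre w hw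
    have : DifferentiableAt ℂ (fun w : ℂ => (1 + w) / (1 - w)) w := by
      apply DifferentiableAt.div _ _ h1 <;> fun_prop
    exact ((this.clog (Or.inl h2)).const_mul _).differentiableWithinAt
  · intro w hw
    obtain ⟨h1, h2⟩ := hre w hw
    have h3 := Complex.abs_arg_lt_pi_div_two_iff.2 (Or.inl h2)
    simp only [Complex.re_ofReal_mul, Complex.im_ofReal_mul, Complex.log_im, abs_mul, abs_of_pos hb0]
    calc _ ≤ b * (Real.pi / 2) := by gcongr
      _ = τ / 2 := by rw [hb]; field_simp
      _ < τ := by linarith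
  · intro x
    set e := Real.exp (x / b) with he
    have he0 : 0 < e := Real.exp_pos _
    refine ⟨(((e - 1) / (e + 1) : ℝ) : ℂ), ?_, ?_⟩
    · rw [mem_ball_zero_iff, Complex.norm_real, Real.norm_eq_abs, abs_lt]
      constructor
      · rw [lt_div_iff₀ (by positivity)]; linarith
      · rw [div_lt_one (by positivity)]; linarith
    · have h1 : (1 + (((e - 1) / (e + 1) : ℝ) : ℂ)) / (1 - (((e - 1) / (e + 1) : ℝ) : ℂ)) = (e : ℂ) := by
        have : (1 + ((e - 1) / (e + 1))) / (1 - ((e - 1) / (e + 1))) = e := by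
          have h2 : 1 - (e - 1) / (e + 1) = 2 / (e + 1) := by field_simp; ring
          rw [h2]; field_simp; ring
        exact_mod_cast congrArg Complex.ofReal this
      simp only [h1]
      rw [← Complex.ofReal_log he0.le, he, Real.log_exp, ← Complex.ofReal_mul]
      congr 1
      field_simp

/-- Given a domain `D ⊆ ℂⁿ`, a point `z ∈ D` and a countable sequence of points
`a j ∈ D`, there exist an analytic disc `φ : 𝔻 → D` and points `λ j ∈ 𝔻` with
`φ 0 = z` and `φ (λ j) = a j` for all `j`; in particular the set of competitors
in the definition of the Lempert function with countably many poles is nonempty. -/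
theorem exists_analytic_disc_through_countable {n : ℕ} (D : Set (Fin n → ℂ))
    (hDopen : IsOpen D) (hDconn : IsConnected D)
    (z : Fin n → ℂ) (hz : z ∈ D)
    (a : ℕ → Fin n → ℂ) (ha : ∀ j, a j ∈ D) :
    ∃ (φ : ℂ → Fin n → ℂ) (lam : ℕ → ℂ),
      DifferentiableOn ℂ φ (ball 0 1) ∧ MapsTo φ (ball 0 1) D ∧ φ 0 = z ∧
      ∀ j, lam j ∈ ball (0 : ℂ) 1 ∧ φ (lam j) = a j := by
  obtain ⟨τ, f, hτ, hf, hf0, hfa⟩ := strip_map hDopen hDconn z hz a ha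
  obtain ⟨h, hd, him, h0, hsurj⟩ := disc_to_strip hτ
  choose k hk using hfa
  choose w hw hhw using hsurj
  refine ⟨fun u => f (h u), fun j => w (k j), ?_, ?_, ?_, ?_⟩
  · intro u hu
    exact (hf _ (him u hu)).1.comp_differentiableWithinAt u (hd u hu)
  · intro u hu
    exact (hf _ (him u hu)).2
  · simp only [h0, hf0]
  · intro j
    refine ⟨hw _, ?_⟩
    simp only [hhw]
    simpa using hk j
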